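/- arXiv:math/9607202 — 5 statements merged into one kernel-verified Lean document; each statement's English description precedes it below -/
import Mathlib

section
/- Let T be a densely defined closed operator from H₁ to H₂ and S a densely defined closed operator from H₂ to H₃. Assume range T = ker S (as subspaces of H₂) and that range S is closed in H₃. Then there is a constant c > 0 such that for every f ∈ H₂ there exists a unique u ∈ H₂ satisfying: u ∈ dom T*, T*u ∈ dom T, u ∈ dom S, Su ∈ dom S*, T(T*u) + S*(Su) = f, and moreover ‖u‖ ≤ c‖f‖. -/
/-- `u` solves the abstract `(∂̄,s)`-Neumann problem for the pair of operators `T`, `S`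
with data `f`:  `u ∈ dom T*`, `T* u ∈ dom T`, `u ∈ dom S`, `S u ∈ dom S*`, and
`T (T* u) + S* (S u) = f`. -/
def SolvesNeumannProblem
    {H₁ H₂ H₃ : Type*}
    [NormedAddCommGroup H₁] [InnerProductSpace ℂ H₁] [CompleteSpace H₁]
    [NormedAddCommGroup H₂] [InnerProductSpace ℂ H₂] [CompleteSpace H₂]
    [NormedAddCommGroup H₃] [InnerProductSpace ℂ H₃] [CompleteSpace H₃]
    (T : H₁ →ₗ.[ℂ] H₂) (S : H₂ →ₗ.[ℂ] H₃) (f u : H₂) : Prop :=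
  ∃ (h₁ : u ∈ T.adjoint.domain) (h₂ : T.adjoint ⟨u, h₁⟩ ∈ T.domain)
    (h₃ : u ∈ S.domain) (h₄ : S ⟨u, h₃⟩ ∈ S.adjoint.domain),
    T ⟨T.adjoint ⟨u, h₁⟩, h₂⟩ + S.adjoint ⟨S ⟨u, h₃⟩, h₄⟩ = f

section NeumannHelpers

variable {E F : Type*} [NormedAddCommGroup E] [InnerProductSpace ℂ E] [CompleteSpace E]
  [NormedAddCommGroup F] [InnerProductSpace ℂ F] [CompleteSpace F]

/-- kernel as a submodule of the ambient space -/
def nKer (A : E →ₗ.[ℂ] F) : Submodule ℂ E := A.graph.comap (LinearMap.inl ℂ E F)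

/-- range as a submodule -/
def nRan (A : E →ₗ.[ℂ] F) : Submodule ℂ F := A.graph.map (LinearMap.snd ℂ E F)

lemma mem_nKer (A : E →ₗ.[ℂ] F) (x : E) : x ∈ nKer A ↔ (x, (0 : F)) ∈ A.graph := Iff.rfl

lemma mem_nRan (A : E →ₗ.[ℂ] F) (y : F) : y ∈ nRan A ↔ ∃ x, (x, y) ∈ A.graph := by
  simp [nRan, Submodule.mem_map]

lemma nRan_eq (A : E →ₗ.[ℂ] F) : nRan A = LinearMap.range A.toFun := by
  ext y
  rw [mem_nRan]
  constructor
  · rintro ⟨x, hx⟩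
    obtain ⟨z, -, hz⟩ := (LinearPMap.mem_graph_iff A).1 hx
    exact ⟨z, hz⟩
  · rintro ⟨z, hz⟩
    exact ⟨z, (LinearPMap.mem_graph_iff A).2 ⟨z, rfl, hz⟩⟩

lemma nKer_eq (A : E →ₗ.[ℂ] F) : nKer A = (LinearMap.ker A.toFun).map A.domain.subtype := by
  ext y
  rw [mem_nKer, Submodule.mem_map]
  constructor
  · intro hx
    obtain ⟨z, h1, hz⟩ := (LinearPMap.mem_graph_iff A).1 hx
    exact ⟨z, hz, h1⟩
  · rintro ⟨z, hz, h1⟩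
    exact (LinearPMap.mem_graph_iff A).2 ⟨z, h1, hz⟩

lemma nKer_closed {A : E →ₗ.[ℂ] F} (hA : A.IsClosed) : IsClosed (nKer A : Set E) := by
  have : Continuous (fun x : E => (x, (0 : F))) := by fun_prop
  exact IsClosed.preimage this hA

lemma mem_adj_graph {A : E →ₗ.[ℂ] F} (hd : Dense (A.domain : Set E)) (y : F) (x : E) :
    (y, x) ∈ A.adjoint.graph ↔ ∀ a b, (a, b) ∈ A.graph → inner ℂ b y = inner ℂ a x := by
  rw [LinearPMap.adjoint_graph_eq_graph_adjoint hd, Submodule.mem_adjoint_iff]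
  simp only [sub_eq_zero]

lemma eq_of_perp {V : Submodule ℂ E} {x y : E} (h : x - y ∈ V) (hx : x - y ∈ Vᗮ) : x = y := by
  have := (Submodule.mem_orthogonal V (x - y)).1 hx _ h
  exact sub_eq_zero.1 (inner_self_eq_zero.1 this)

lemma exists_pinv {A : E →ₗ.[ℂ] F} (hA : A.IsClosed) (hR : IsClosed (nRan A : Set F)) :
    ∃ K : F →L[ℂ] E, ∀ y, (∃ p, (K y, p) ∈ A.graph ∧ y - p ∈ (nRan A)ᗮ) ∧ K y ∈ (nKer A)ᗮ := by
  have : CompleteSpace (nRan A) := hR.completeSpace_coe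
  have : CompleteSpace (nKer A) := (nKer_closed hA).completeSpace_coe
  have ex : ∀ y, ∃ x, (x, (nRan A).starProjection y) ∈ A.graph ∧ x ∈ (nKer A)ᗮ := by
    intro y
    obtain ⟨z, hz⟩ := (mem_nRan A _).1 ((nRan A).starProjection_apply_mem y)
    refine ⟨z - (nKer A).starProjection z, ?_, (nKer A).sub_starProjection_mem_orthogonal z⟩
    have h2 := (mem_nKer A _).1 ((nKer A).starProjection_apply_mem z)
    simpa using A.graph.sub_mem hz h2
  have un : ∀ {x x' : E} {p : F}, (x, p) ∈ A.graph → x ∈ (nKer A)ᗮ → (x', p) ∈ A.graph →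
      x' ∈ (nKer A)ᗮ → x = x' := by
    intro x x' p h1 h2 h3 h4
    refine eq_of_perp (V := nKer A) ?_ (Submodule.sub_mem _ h2 h4)
    rw [mem_nKer]
    simpa using A.graph.sub_mem h1 h3
  choose g hg hg' using ex
  let L : F →ₗ[ℂ] E :=
    { toFun := g
      map_add' := fun y y' => un (hg _) (hg' _)
        (by simpa using A.graph.add_mem (hg y) (hg y')) (Submodule.add_mem _ (hg' y) (hg' y'))
      map_smul' := fun c y => un (hg _) (hg' _)
        (by simpa using A.graph.smul_mem c (hg y)) (Submodule.smul_mem _ c (hg' y)) }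
  have hL : IsClosed (L.graph : Set (F × E)) := by
    have e : (L.graph : Set (F × E)) =
        (fun q : F × E => (q.2, (nRan A).starProjection q.1)) ⁻¹' (A.graph : Set (E × F)) ∩
        (fun q : F × E => q.2) ⁻¹' ((nKer A)ᗮ : Submodule ℂ E) := by
      ext ⟨y, x⟩
      simp only [SetLike.mem_coe, LinearMap.mem_graph_iff, Set.mem_inter_iff, Set.mem_preimage]
      constructor
      · rintro rfl
        exact ⟨hg y, hg' y⟩
      · rintro ⟨h1, h2⟩
        exact un h1 h2 (hg y) (hg' y)
    rw [e]
    refine IsClosed.inter (IsClosed.preimage (by fun_prop) hA)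
      (IsClosed.preimage (by fun_prop) (Submodule.isClosed_orthogonal _))
  refine ⟨⟨L, L.continuous_of_isClosed_graph hL⟩, fun y => ⟨⟨_, hg y, ?_⟩, hg' y⟩⟩
  exact (nRan A).sub_starProjection_mem_orthogonal y

lemma pinv_adj {A : E →ₗ.[ℂ] F} (hd : Dense (A.domain : Set E)) (hA : A.IsClosed)
    (hR : IsClosed (nRan A : Set F)) (K : F →L[ℂ] E)
    (hK : ∀ y, (∃ p, (K y, p) ∈ A.graph ∧ y - p ∈ (nRan A)ᗮ) ∧ K y ∈ (nKer A)ᗮ) (x : E) :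
    (∃ w, (K.adjoint x, w) ∈ A.adjoint.graph ∧ x - w ∈ nKer A ∧ w ∈ (nKer A)ᗮ) ∧
      K.adjoint x ∈ nRan A := by
  have : CompleteSpace (nRan A) := hR.completeSpace_coe
  have : CompleteSpace (nKer A) := (nKer_closed hA).completeSpace_coe
  constructor
  · have hw := (nKer A).sub_starProjection_mem_orthogonal x
    have hn : x - (x - (nKer A).starProjection x) ∈ nKer A := by
      simp
    set w := x - (nKer A).starProjection x
    refine ⟨w, ?_, hn, hw⟩
    rw [mem_adj_graph hd]
    intro a b hab
    rw [ContinuousLinearMap.adjoint_inner_right]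
    obtain ⟨⟨p, hp, hp'⟩, hk⟩ := hK b
    have hb : b = p := eq_of_perp (V := nRan A)
      (Submodule.sub_mem _ ((mem_nRan A _).2 ⟨_, hab⟩) ((mem_nRan A _).2 ⟨_, hp⟩)) hp'
    subst hb
    have h1 : a - K b ∈ nKer A := by
      rw [mem_nKer]
      simpa using A.graph.sub_mem hab hp
    have h2 := (Submodule.mem_orthogonal _ _).1 hw _ h1
    have h3 := (Submodule.mem_orthogonal' _ _).1 hk _ hn
    rw [inner_sub_left] at h2
    rw [inner_sub_right] at h3
    rw [sub_eq_zero.1 h2, sub_eq_zero.1 h3]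
  · rw [← Submodule.orthogonal_orthogonal (nRan A), Submodule.mem_orthogonal]
    intro y hy
    rw [ContinuousLinearMap.adjoint_inner_right]
    obtain ⟨⟨p, hp, hp'⟩, hk⟩ := hK y
    have hp0 : p = 0 := by
      refine eq_of_perp (V := nRan A) (by simpa using (mem_nRan A _).2 ⟨_, hp⟩) ?_
      simpa using Submodule.sub_mem _ hy hp'
    subst hp0
    have : K y = 0 := eq_of_perp (V := nKer A) (by simpa [mem_nKer] using hp) (by simpa using hk)
    rw [this, inner_zero_left]

end NeumannHelpers

lemma solves_iff
    {H₁ H₂ H₃ : Type*}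
    [NormedAddCommGroup H₁] [InnerProductSpace ℂ H₁] [CompleteSpace H₁]
    [NormedAddCommGroup H₂] [InnerProductSpace ℂ H₂] [CompleteSpace H₂]
    [NormedAddCommGroup H₃] [InnerProductSpace ℂ H₃] [CompleteSpace H₃]
    (T : H₁ →ₗ.[ℂ] H₂) (S : H₂ →ₗ.[ℂ] H₃) (f u : H₂) :
    SolvesNeumannProblem T S f u ↔ ∃ v p w q, (u, v) ∈ T.adjoint.graph ∧ (v, p) ∈ T.graph ∧
      (u, w) ∈ S.graph ∧ (w, q) ∈ S.adjoint.graph ∧ p + q = f := by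
  constructor
  · rintro ⟨h₁, h₂, h₃, h₄, h⟩
    exact ⟨_, _, _, _, T.adjoint.mem_graph ⟨u, h₁⟩, T.mem_graph ⟨_, h₂⟩, S.mem_graph ⟨u, h₃⟩,
      S.adjoint.mem_graph ⟨_, h₄⟩, h⟩
  · rintro ⟨v, p, w, q, h1, h2, h3, h4, h⟩
    obtain ⟨⟨a, ha⟩, e1, e2⟩ := (LinearPMap.mem_graph_iff _).1 h1
    obtain ⟨⟨b, hb⟩, e3, e4⟩ := (LinearPMap.mem_graph_iff _).1 h2
    obtain ⟨⟨c, hc⟩, e5, e6⟩ := (LinearPMap.mem_graph_iff _).1 h3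
    obtain ⟨⟨d, hd⟩, e7, e8⟩ := (LinearPMap.mem_graph_iff _).1 h4
    dsimp only at *
    subst e1 e3 e5 e7 e4 e8
    subst e2 e6
    exact ⟨ha, hb, hc, hd, h⟩

lemma neumann_unique
    {H₁ H₂ H₃ : Type*}
    [NormedAddCommGroup H₁] [InnerProductSpace ℂ H₁] [CompleteSpace H₁]
    [NormedAddCommGroup H₂] [InnerProductSpace ℂ H₂] [CompleteSpace H₂]
    [NormedAddCommGroup H₃] [InnerProductSpace ℂ H₃] [CompleteSpace H₃]
    (T : H₁ →ₗ.[ℂ] H₂) (S : H₂ →ₗ.[ℂ] H₃)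
    (hTdense : Dense (T.domain : Set H₁)) (hSdense : Dense (S.domain : Set H₂))
    (hRK : nRan T = nKer S) {f u u' : H₂}
    (h : SolvesNeumannProblem T S f u) (h' : SolvesNeumannProblem T S f u') : u = u' := by
  rw [solves_iff] at h h'
  obtain ⟨v, p, w, q, h1, h2, h3, h4, h5⟩ := h
  obtain ⟨v', p', w', q', h1', h2', h3', h4', h5'⟩ := h'
  have k1 : (u - u', v - v') ∈ T.adjoint.graph := T.adjoint.graph.sub_mem h1 h1'
  have k2 : (v - v', p - p') ∈ T.graph := T.graph.sub_mem h2 h2'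
  have k3 : (u - u', w - w') ∈ S.graph := S.graph.sub_mem h3 h3'
  have k4 : (w - w', q - q') ∈ S.adjoint.graph := S.adjoint.graph.sub_mem h4 h4'
  have k5 : (p - p') + (q - q') = 0 := by
    rw [← sub_eq_zero.2 (h5.trans h5'.symm)]; abel
  rw [mem_adj_graph hTdense] at k1
  rw [mem_adj_graph hSdense] at k4
  have m1 := k1 _ _ k2
  have m2 := k4 _ _ k3
  have m3 : inner ℂ (v - v') (v - v') + inner ℂ (w - w') (w - w') = 0 := by
    have m4 : inner ℂ (q - q') (u - u') = inner ℂ (w - w') (w - w') := by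
      rw [← inner_conj_symm, ← m2, inner_conj_symm]
    rw [← m1, ← m4, ← inner_add_left, k5, inner_zero_left]
  have m5 : ‖v - v'‖ ^ 2 + ‖w - w'‖ ^ 2 = 0 := by
    have := congrArg (RCLike.re (K := ℂ)) m3
    rwa [map_add, inner_self_eq_norm_sq, inner_self_eq_norm_sq, map_zero] at this
  have hv : v - v' = 0 := by
    rw [← norm_eq_zero]; nlinarith [sq_nonneg ‖v - v'‖, sq_nonneg ‖w - w'‖]
  have hw : w - w' = 0 := by
    rw [← norm_eq_zero]; nlinarith [sq_nonneg ‖v - v'‖, sq_nonneg ‖w - w'‖]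
  rw [hw] at k3
  have hk : u - u' ∈ nRan T := by rw [hRK]; exact k3
  obtain ⟨z, hz⟩ := (mem_nRan T _).1 hk
  have := k1 _ _ hz
  rw [hv, inner_zero_right] at this
  exact sub_eq_zero.1 (inner_self_eq_zero.1 this)

/-- Let `T : H₁ → H₂` and `S : H₂ → H₃` be densely defined closed
operators with `range T = ker S` (as subspaces of `H₂`) and `range S` closed in `H₃`.
Then there is a constant `c > 0` such that every `f ∈ H₂` admits a unique
`u ∈ H₂` with `u ∈ dom T*`, `T* u ∈ dom T`, `u ∈ dom S`, `S u ∈ dom S*` and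
`T (T* u) + S* (S u) = f`; moreover `‖u‖ ≤ c * ‖f‖`. -/
theorem exists_unique_neumann_solution
    {H₁ H₂ H₃ : Type*}
    [NormedAddCommGroup H₁] [InnerProductSpace ℂ H₁] [CompleteSpace H₁]
    [NormedAddCommGroup H₂] [InnerProductSpace ℂ H₂] [CompleteSpace H₂]
    [NormedAddCommGroup H₃] [InnerProductSpace ℂ H₃] [CompleteSpace H₃]
    (T : H₁ →ₗ.[ℂ] H₂) (S : H₂ →ₗ.[ℂ] H₃)
    (hTdense : Dense (T.domain : Set H₁)) (hTclosed : T.IsClosed)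
    (hSdense : Dense (S.domain : Set H₂)) (hSclosed : S.IsClosed)
    (hrange : LinearMap.range T.toFun = (LinearMap.ker S.toFun).map S.domain.subtype)
    (hSrange : IsClosed (LinearMap.range S.toFun : Set H₃)) :
    ∃ c > 0, ∀ f : H₂,
      ∃ u : H₂, SolvesNeumannProblem T S f u ∧ ‖u‖ ≤ c * ‖f‖ ∧
        ∀ u' : H₂, SolvesNeumannProblem T S f u' → u' = u := by
  have hRK : nRan T = nKer S := by rw [nRan_eq, nKer_eq, hrange]
  have hRT : IsClosed (nRan T : Set H₂) := hRK ▸ nKer_closed hSclosed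
  have hRS : IsClosed (nRan S : Set H₃) := by rw [nRan_eq]; exact hSrange
  obtain ⟨A, hA⟩ := exists_pinv hTclosed hRT
  obtain ⟨B, hB⟩ := exists_pinv hSclosed hRS
  have hA' := pinv_adj hTdense hTclosed hRT A hA
  have hB' := pinv_adj hSdense hSclosed hRS B hB
  let N : H₂ →L[ℂ] H₂ := A.adjoint ∘L A + B ∘L B.adjoint
  have hsol : ∀ f, SolvesNeumannProblem T S f (N f) := by
    intro f
    rw [solves_iff]
    obtain ⟨⟨p, hp, hfp⟩, hAk⟩ := hA f
    obtain ⟨⟨v, hv, hv1, hv2⟩, hAr⟩ := hA' (A f)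
    obtain ⟨⟨w, hw, hw1, hw2⟩, hBr⟩ := hB' f
    obtain ⟨⟨p', hp', hfp'⟩, hBk⟩ := hB (B.adjoint f)
    have e1 : A f = v := eq_of_perp hv1 (Submodule.sub_mem _ hAk hv2)
    have e2 : B.adjoint f = p' :=
      eq_of_perp (Submodule.sub_mem _ hBr ((mem_nRan S _).2 ⟨_, hp'⟩)) hfp'
    have h1 : (B (B.adjoint f), (0 : H₁)) ∈ T.adjoint.graph := by
      rw [mem_adj_graph hTdense]
      intro a b hab
      rw [inner_zero_right]
      exact (Submodule.mem_orthogonal _ _).1 hBk _ (hRK ▸ (mem_nRan T _).2 ⟨_, hab⟩)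
    have h2 : (A.adjoint (A f), (0 : H₃)) ∈ S.graph := by
      rw [hRK] at hAr
      exact hAr
    refine ⟨A f, p, B.adjoint f, w, ?_, hp, ?_, hw, ?_⟩
    · rw [← e1] at hv
      simpa [N] using T.adjoint.graph.add_mem hv h1
    · rw [← e2] at hp'
      simpa [N] using S.graph.add_mem h2 hp'
    · have : f - w = p := by
        refine eq_of_perp (V := nKer S)
          (Submodule.sub_mem _ hw1 (hRK ▸ (mem_nRan T _).2 ⟨_, hp⟩)) ?_
        rw [hRK] at hfp
        have := Submodule.sub_mem _ hfp hw2
        rwa [sub_right_comm] at this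
      rw [← this]; abel
  refine ⟨‖N‖ + 1, by positivity, fun f => ⟨N f, hsol f, ?_, ?_⟩⟩
  · calc ‖N f‖ ≤ ‖N‖ * ‖f‖ := N.le_opNorm f
      _ ≤ (‖N‖ + 1) * ‖f‖ := by gcongr; linarith
  · intro u' hu'
    exact neumann_unique T S hTdense hSdense hRK hu' (hsol f)
end

section
/- Let s be a positive integer and λ > 0. Let v : ℝ → ℂ be a smooth function that is bounded on [0, ∞), satisfies L_λ^s v = 0 on [0, ∞) where L_λ w := λ² w − w'', and satisfies the boundary conditions B_{s,ℓ} v(0) = 0 for all ℓ = 0, 1, …, s−1, where B_{s,ℓ} v := ∑_{k=0}^{s−1−ℓ} (−1)^k binom(s, ℓ+k+1) λ^{2(s−1−ℓ−k)} v^{(ℓ+2k+1)}. Then ∑_{j=0}^{s} binom(s, j) λ^{2(s−j)} ∫_0^∞ |v^{(j)}(x)|² dx = 0. -/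
/-- The ordinary differential operator `L_λ w := λ² w - w''`. -/
noncomputable def Llam (lam : ℝ) (w : ℝ → ℂ) : ℝ → ℂ :=
  fun x => (lam : ℂ) ^ 2 * w x - iteratedDeriv 2 w x

/-- The boundary operator
`B_{s,ℓ} v := ∑_{k=0}^{s-1-ℓ} (-1)^k C(s, ℓ+k+1) λ^{2(s-1-ℓ-k)} v^{(ℓ+2k+1)}`. -/
noncomputable def Bop (lam : ℝ) (s ℓ : ℕ) (v : ℝ → ℂ) : ℝ → ℂ :=
  fun x => ∑ k ∈ Finset.range (s - 1 - ℓ + 1),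
    (-1 : ℂ) ^ k * (s.choose (ℓ + k + 1) : ℂ) * (lam : ℂ) ^ (2 * (s - 1 - ℓ - k)) *
      iteratedDeriv (ℓ + 2 * k + 1) v x



theorem sm_iter {v : ℝ → ℂ} (h : ContDiff ℝ (⊤ : ℕ∞) v) (n : ℕ) :
    ContDiff ℝ (⊤ : ℕ∞) (iteratedDeriv n v) := by
  rw [iteratedDeriv_eq_iterate]
  exact ContDiff.iterate_deriv n h

theorem hd_iter {v : ℝ → ℂ} (h : ContDiff ℝ (⊤ : ℕ∞) v) (n : ℕ) (x : ℝ) :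
    HasDerivAt (iteratedDeriv n v) (iteratedDeriv (n+1) v x) x := by
  rw [iteratedDeriv_succ]
  exact ((sm_iter h n).differentiable (by simp) x).hasDerivAt

theorem sm_L {lam : ℝ} {v : ℝ → ℂ} (h : ContDiff ℝ (⊤ : ℕ∞) v) :
    ContDiff ℝ (⊤ : ℕ∞) (Llam lam v) := 
  (contDiff_const.mul h).sub (sm_iter h 2)

theorem iter_L {lam : ℝ} {v : ℝ → ℂ} (h : ContDiff ℝ (⊤ : ℕ∞) v) (n : ℕ) (x : ℝ) :
    iteratedDeriv n (Llam lam v) x = (lam:ℂ)^2 * iteratedDeriv n v x - iteratedDeriv (n+2) v x := by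
  induction n generalizing x with
  | zero => simp [Llam]
  | succ n ih =>
    have : iteratedDeriv n (Llam lam v) = fun x => (lam:ℂ)^2 * iteratedDeriv n v x - iteratedDeriv (n+2) v x := funext ih
    rw [iteratedDeriv_succ, this]
    rw [(((hd_iter h n x).const_mul _).fun_sub (hd_iter h (n+2) x)).deriv]

noncomputable def shiftE : Module.End ℂ (ℕ → ℂ) where
  toFun a k := - a (k+1)
  map_add' a b := by ext k; simp [add_comm]
  map_smul' a b := by ext k; simp

theorem shiftE_pow (n : ℕ) (a : ℕ → ℂ) (k : ℕ) : (shiftE^n) a k = (-1)^n * a (k+n) := by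
  induction n generalizing a with
  | zero => simp
  | succ n ih =>
    rw [pow_succ, Module.End.mul_apply, ih]
    simp [shiftE, pow_succ, add_assoc]

theorem L_iter_T {lam : ℝ} (s : ℕ) {v : ℝ → ℂ} (h : ContDiff ℝ (⊤ : ℕ∞) v) (x : ℝ) :
    (fun k => iteratedDeriv (2*k) ((Llam lam)^[s] v) x) =
      ((shiftE + algebraMap ℂ _ ((lam:ℂ)^2))^s) (fun k => iteratedDeriv (2*k) v x) := by
  induction s generalizing v with
  | zero => simp
  | succ s ih =>
    rw [Function.iterate_succ_apply, ih (sm_L h), pow_succ _ s, Module.End.mul_apply]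
    congr 1
    ext k
    rw [iter_L h]
    rw [LinearMap.add_apply, Module.algebraMap_end_apply]
    simp only [shiftE, mul_add, LinearMap.coe_mk, AddHom.coe_mk, Pi.add_apply, Pi.smul_apply, smul_eq_mul, mul_one]
    ring

theorem L_iter {lam : ℝ} (s : ℕ) {v : ℝ → ℂ} (h : ContDiff ℝ (⊤ : ℕ∞) v) (x : ℝ) :
    (Llam lam)^[s] v x = ∑ k ∈ Finset.range (s+1), (-1:ℂ)^k * (s.choose k : ℂ) * (lam:ℂ)^(2*(s-k)) *
      iteratedDeriv (2*k) v x := by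
  have := congrFun (L_iter_T (lam := lam) s h x) 0
  simp only [mul_zero, iteratedDeriv_zero] at this
  rw [this, Commute.add_pow (Algebra.commutes _ _).symm]
  simp only [LinearMap.sum_apply, Finset.sum_apply, ]
  refine Finset.sum_congr rfl fun k _ => ?_
  rw [Module.End.mul_apply, Module.End.mul_apply, shiftE_pow, ← map_pow, Module.algebraMap_end_apply]
  rw [← nsmul_one (s.choose k)]
  simp [pow_mul]
  ring

noncomputable def GG (lam : ℝ) (s : ℕ) (v : ℝ → ℂ) (m : ℕ) (x : ℝ) : ℂ :=
  ∑ k ∈ Finset.range (s + 1 - m),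
    (-1 : ℂ) ^ k * (s.choose (m + k) : ℂ) * (lam : ℂ) ^ (2 * (s - m - k)) *
      iteratedDeriv (m + 2 * k) v x

theorem GG_zero {lam : ℝ} (s : ℕ) {v : ℝ → ℂ} (h : ContDiff ℝ (⊤ : ℕ∞) v) (x : ℝ) :
    GG lam s v 0 x = (Llam lam)^[s] v x := by
  rw [L_iter s h]; simp [GG]

theorem GG_B {lam : ℝ} (s : ℕ) {v : ℝ → ℂ} (l : ℕ) (hl : l < s) (x : ℝ) :
    GG lam s v (l+1) x = Bop lam s l v x := by
  unfold GG Bop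
  have : s + 1 - (l+1) = s - 1 - l + 1 := by omega
  rw [this]
  refine Finset.sum_congr rfl fun k _ => ?_
  rw [show l + 1 + k = l + k + 1 by ring, show s - (l+1) - k = s - 1 - l - k by omega,
    show l + 1 + 2 * k = l + 2 * k + 1 by ring]

theorem GG_deriv {lam : ℝ} (s : ℕ) {v : ℝ → ℂ} (h : ContDiff ℝ (⊤ : ℕ∞) v) (m : ℕ) (hm : m ≤ s) (x : ℝ) :
    HasDerivAt (GG lam s v (m+1))
      ((s.choose m : ℂ) * (lam:ℂ)^(2*(s-m)) * iteratedDeriv m v x - GG lam s v m x) x := by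
  have h1 : HasDerivAt (GG lam s v (m+1)) (∑ k ∈ Finset.range (s + 1 - (m+1)),
    (-1 : ℂ) ^ k * (s.choose (m+1 + k) : ℂ) * (lam : ℂ) ^ (2 * (s - (m+1) - k)) *
      iteratedDeriv (m+1 + 2 * k + 1) v x) x := by
    unfold GG
    exact HasDerivAt.fun_sum fun k _ => (hd_iter h _ x).const_mul _
  convert h1 using 1
  unfold GG
  rw [show s + 1 - m = (s + 1 - (m+1)) + 1 by omega, Finset.sum_range_succ']
  simp only [pow_zero, add_zero, mul_zero, one_mul, Nat.sub_zero]
  rw [sub_add_cancel_right, ← Finset.sum_neg_distrib]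
  refine Finset.sum_congr rfl fun k _ => ?_
  rw [show m + (k+1) = m + 1 + k by ring, show s - m - (k+1) = s - (m+1) - k by omega,
    show m + 2 * (k+1) = m + 1 + 2 * k + 1 by ring]
  ring

noncomputable def FF (lam : ℝ) (s : ℕ) (v : ℝ → ℂ) (x : ℝ) : ℂ :=
  ∑ m ∈ Finset.range s, star (iteratedDeriv m v x) * GG lam s v (m+1) x

theorem FF_deriv {lam : ℝ} (s : ℕ) {v : ℝ → ℂ} (h : ContDiff ℝ (⊤ : ℕ∞) v) (x : ℝ)
    (h0 : (Llam lam)^[s] v x = 0) :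
    HasDerivAt (FF lam s v)
      (((∑ m ∈ Finset.range (s+1), (s.choose m : ℝ) * lam^(2*(s-m)) * ‖iteratedDeriv m v x‖^2 : ℝ)) : ℂ) x := by
  have h1 : HasDerivAt (FF lam s v) (∑ m ∈ Finset.range s,
      (star (iteratedDeriv (m+1) v x) * GG lam s v (m+1) x + star (iteratedDeriv m v x) * 
      ((s.choose m : ℂ) * (lam:ℂ)^(2*(s-m)) * iteratedDeriv m v x - GG lam s v m x))) x := by
    unfold FF
    exact HasDerivAt.fun_sum fun m hm => (hd_iter h _ x).star.mul
      (GG_deriv s h m (Finset.mem_range.1 hm).le x)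
  convert h1 using 1
  have e : ∀ m, ((‖iteratedDeriv m v x‖:ℂ))^2 = star (iteratedDeriv m v x) * iteratedDeriv m v x := by
    intro m
    rw [← Complex.conj_mul']; rfl
  push_cast
  simp only [e]
  have e2 : ∀ m ∈ Finset.range s, (star (iteratedDeriv (m+1) v x) * GG lam s v (m+1) x + star (iteratedDeriv m v x) * 
      ((s.choose m : ℂ) * (lam:ℂ)^(2*(s-m)) * iteratedDeriv m v x - GG lam s v m x)) =
      (star (iteratedDeriv (m+1) v x) * GG lam s v (m+1) x - star (iteratedDeriv m v x) * GG lam s v m x)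
      + (s.choose m : ℂ) * (lam:ℂ)^(2*(s-m)) * (star (iteratedDeriv m v x) * iteratedDeriv m v x) := by
    intro m _; ring
  rw [Finset.sum_congr rfl e2, Finset.sum_add_distrib, 
    Finset.sum_range_sub (fun m => star (iteratedDeriv m v x) * GG lam s v m x), GG_zero s h, h0,
    Finset.sum_range_succ]
  have : GG lam s v s x = iteratedDeriv s v x := by simp [GG]
  rw [this]
  simp
  ring

open Polynomial Filter Topology in
theorem poly_solve (c : ℂ) (P : ℂ[X]) : ∃ R : ℂ[X], derivative R + C c * R = P := by
  induction P using Polynomial.induction_on' with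
  | add p q hp hq =>
    obtain ⟨a, ha⟩ := hp
    obtain ⟨b, hb⟩ := hq
    refine ⟨a + b, ?_⟩
    rw [← ha, ← hb, derivative_add]; ring
  | monomial n a =>
    by_cases hc : c = 0
    · refine ⟨monomial (n+1) (a / (n+1)), ?_⟩
      have : (n:ℂ) + 1 ≠ 0 := by exact_mod_cast n.succ_ne_zero
      simp [hc, this]
    · induction n generalizing a with
      | zero =>
        refine ⟨C (a / c), ?_⟩
        rw [derivative_C, ← C_mul, mul_div_cancel₀ _ hc]; simp
      | succ n ih =>
        obtain ⟨R, hR⟩ := ih (a / c * (n+1))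
        refine ⟨monomial (n+1) (a/c) - R, ?_⟩
        rw [derivative_sub, derivative_monomial, mul_sub, C_mul_monomial, mul_div_cancel₀ _ hc]
        simp only [Nat.add_sub_cancel]
        push_cast
        rw [← hR]; ring

def EP (lam : ℝ) (f : ℝ → ℂ) : Prop :=
  ∃ P Q : Polynomial ℂ, ∀ x : ℝ, 0 ≤ x →
    f x = P.eval (x:ℂ) * Complex.exp (lam * x) + Q.eval (x:ℂ) * Complex.exp (-lam * x)

theorem hd_pe (P : Polynomial ℂ) (c : ℂ) (x : ℝ) :
    HasDerivAt (fun x : ℝ => P.eval (x:ℂ) * Complex.exp (c * x))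
      ((Polynomial.derivative P + Polynomial.C c * P).eval (x:ℂ) * Complex.exp (c * x)) x := by
  have h := ((P.hasDerivAt (x:ℂ)).mul (((hasDerivAt_id (x:ℂ)).const_mul c).cexp)).comp_ofReal
  refine HasDerivAt.congr_deriv h ?_
  simp only [Polynomial.eval_add, Polynomial.eval_mul, Polynomial.eval_C, id]
  ring

theorem EP_step (lam : ℝ) (mu : ℂ) (hmu : mu = lam ∨ mu = -lam) (f f' : ℝ → ℂ)
    (hf : ∀ x, HasDerivAt f (f' x) x) (h : EP lam (fun x => f' x + mu * f x)) : EP lam f := by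
  obtain ⟨P, Q, hPQ⟩ := h
  obtain ⟨R, hR⟩ := poly_solve (lam + mu) P
  obtain ⟨S, hS⟩ := poly_solve (-lam + mu) Q
  have key : ∃ K : ℂ, ∀ x : ℝ, 0 ≤ x → f x = R.eval (x:ℂ) * Complex.exp (lam * x) + S.eval (x:ℂ) * Complex.exp (-lam * x) + K * Complex.exp (-mu * x) := by
    let g : ℝ → ℂ := fun x => (f x - (R.eval (x:ℂ) * Complex.exp (lam * x) + S.eval (x:ℂ) * Complex.exp (-lam * x))) * Complex.exp (mu * x)
    have hg : ∀ x : ℝ, 0 ≤ x → HasDerivAt g 0 x := by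
      intro x hx
      have h2 : HasDerivAt (fun x : ℝ => Complex.exp (mu * x)) (mu * Complex.exp (mu * x)) x := by
        have := hd_pe 1 mu x
        simpa using this
      have h3 := ((hf x).sub ((hd_pe R lam x).add (hd_pe S (-lam) x))).mul h2
      refine h3.congr_deriv ?_
      have h4 : f' x + mu * f x = _ := hPQ x hx
      rw [← hR, ← hS] at h4
      have h5 : f' x = -mu * f x + (f' x + mu * f x) := by ring
      rw [h5, h4]
      simp only [Polynomial.eval_add, Polynomial.eval_mul, Polynomial.eval_C, Pi.add_apply, Pi.sub_apply]
      ring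
    refine ⟨g 0, fun x hx => ?_⟩
    have hc := constant_of_has_deriv_right_zero (f := g) (a := 0) (b := x)
      (fun y hy => (hg y hy.1).continuousAt.continuousWithinAt)
      (fun y hy => (hg y hy.1).hasDerivWithinAt) x ⟨hx, le_rfl⟩
    rw [← hc]
    simp only [g]
    rw [mul_assoc _ (Complex.exp (mu * x)), ← Complex.exp_add]
    simp
  obtain ⟨K, hK⟩ := key
  rcases hmu with rfl | rfl
  · refine ⟨R, S + Polynomial.C K, fun x hx => ?_⟩
    rw [hK x hx]; simp; ring
  · refine ⟨R + Polynomial.C K, S, fun x hx => ?_⟩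
    rw [hK x hx]; simp; ring

open Filter Topology in
theorem poly_decay (Q : Polynomial ℂ) (b : ℝ) (hb : 0 < b) :
    Tendsto (fun x : ℝ => Q.eval (x:ℂ) * Complex.exp (-b * x)) atTop (𝓝 0) := by
  induction Q using Polynomial.induction_on' with
  | add p q hp hq =>
    have := hp.add hq
    simpa [add_mul] using this
  | monomial n a =>
    have h := (isLittleO_pow_exp_pos_mul_atTop n hb).tendsto_div_nhds_zero
    have h2 := (Complex.continuous_ofReal.tendsto 0).comp h
    have h3 := h2.const_mul a
    simp only [Complex.ofReal_zero, mul_zero] at h3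
    refine h3.congr fun x => ?_
    simp [Complex.exp_neg]
    ring

open Filter Topology in
theorem poly_zero (P : Polynomial ℂ) (h : Tendsto (fun x : ℝ => P.eval (x:ℂ)) atTop (𝓝 0)) : P = 0 := by
  have hz : Tendsto (fun x : ℝ => ‖(x:ℂ)‖) atTop atTop := by
    simpa using tendsto_abs_atTop_atTop
  by_cases hd : 0 < P.degree
  · have := P.tendsto_norm_atTop hd hz
    exact absurd h.norm (not_tendsto_nhds_of_tendsto_atTop this _)
  · rw [Polynomial.eq_C_of_degree_le_zero (not_lt.1 hd)] at h ⊢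
    simp only [Polynomial.eval_C] at h
    rw [tendsto_nhds_unique tendsto_const_nhds h]; simp

open Filter Topology in
theorem EP_bdd (lam : ℝ) (hlam : 0 < lam) (f : ℝ → ℂ) (h : EP lam f)
    (hbdd : ∃ M : ℝ, ∀ x : ℝ, 0 ≤ x → ‖f x‖ ≤ M) :
    ∃ Q : Polynomial ℂ, ∀ x : ℝ, 0 ≤ x → f x = Q.eval (x:ℂ) * Complex.exp (-lam * x) := by
  obtain ⟨P, Q, hPQ⟩ := h
  obtain ⟨M, hM⟩ := hbdd
  have hP : P = 0 := by
    apply poly_zero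
    have h1 := poly_decay Q (2*lam) (by positivity)
    have h2 : Tendsto (fun x : ℝ => Complex.exp (-lam * x) * f x) atTop (𝓝 0) := by
      have h3 := poly_decay 1 lam hlam
      simp only [Polynomial.eval_one, one_mul] at h3
      refine h3.zero_mul_isBoundedUnder_le ⟨M, ?_⟩
      rw [eventually_map]
      filter_upwards [eventually_ge_atTop 0] with x hx using hM x hx
    have h4 := h2.sub h1
    rw [sub_zero] at h4
    refine h4.congr' ?_
    filter_upwards [eventually_ge_atTop 0] with x hx
    rw [hPQ x hx]
    have e1 : Complex.exp (-(2*lam : ℝ) * x) = Complex.exp (-lam * x) * Complex.exp (-lam * x) := by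
      rw [← Complex.exp_add]; congr 1; push_cast; ring
    have e2 : Complex.exp (-lam * x) * Complex.exp (lam * x) = 1 := by
      rw [← Complex.exp_add]; simp
    rw [e1]
    linear_combination (P.eval (x:ℂ)) * e2
  refine ⟨Q, fun x hx => ?_⟩
  rw [hPQ x hx, hP]; simp

theorem EP_L (lam : ℝ) (s : ℕ) (v : ℝ → ℂ) (h : ContDiff ℝ (⊤ : ℕ∞) v)
    (hode : ∀ x : ℝ, 0 ≤ x → (Llam lam)^[s] v x = 0) : EP lam v := by
  induction s generalizing v with
  | zero => exact ⟨0, 0, fun x hx => by simpa using hode x hx⟩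
  | succ s ih =>
    obtain ⟨P, Q, hPQ⟩ := ih (Llam lam v) (sm_L h) (fun x hx => by
      simpa [Function.iterate_succ_apply] using hode x hx)
    have d0 : ∀ x, HasDerivAt v (iteratedDeriv 1 v x) x := by
      intro x; simpa using hd_iter h 0 x
    refine EP_step lam lam (Or.inl rfl) v (iteratedDeriv 1 v) d0 ?_
    refine EP_step lam (-lam) (Or.inr rfl) _ (fun x => iteratedDeriv 2 v x + lam * iteratedDeriv 1 v x)
      (fun x => (hd_iter h 1 x).add ((d0 x).const_mul _)) ?_
    refine ⟨-P, -Q, fun x hx => ?_⟩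
    have := hPQ x hx
    simp only [Llam] at this
    simp only [Polynomial.eval_neg]
    linear_combination -this

theorem iter_form (lam : ℝ) (v : ℝ → ℂ) (h : ContDiff ℝ (⊤ : ℕ∞) v) (Q : Polynomial ℂ)
    (hQ : ∀ x : ℝ, 0 ≤ x → v x = Q.eval (x:ℂ) * Complex.exp (-lam * x)) (j : ℕ) :
    ∃ R : Polynomial ℂ, ∀ x : ℝ, 0 < x →
      iteratedDeriv j v x = R.eval (x:ℂ) * Complex.exp (-lam * x) := by
  induction j with
  | zero => exact ⟨Q, fun x hx => by simpa using hQ x hx.le⟩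
  | succ j ih =>
    obtain ⟨R, hR⟩ := ih
    refine ⟨_, fun x hx => (hd_iter h j x).unique ((hd_pe R (-lam) x).congr_of_eventuallyEq ?_)⟩
    filter_upwards [lt_mem_nhds hx] with y hy using hR y hy

open Filter Topology Asymptotics in
theorem iter_bigO (lam : ℝ) (hlam : 0 < lam) (v : ℝ → ℂ) (R : Polynomial ℂ)
    (hR : ∀ x : ℝ, 0 < x → v x = R.eval (x:ℂ) * Complex.exp (-lam * x)) :
    v =O[atTop] fun x => Real.exp (-(lam/2) * x) := by
  have h1 := (poly_decay R (lam/2) (by positivity)).isBigO_one ℝ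
  have h2 := h1.mul (show (fun x : ℝ => ((Real.exp (-(lam/2) * x) : ℝ) : ℂ)) =O[atTop] fun x : ℝ => Real.exp (-(lam/2) * x) from
    IsBigO.of_bound 1 (Eventually.of_forall fun x => by rw [Complex.norm_real, one_mul]))
  simp only [one_mul] at h2
  refine h2.congr' ?_ EventuallyEq.rfl
  filter_upwards [eventually_gt_atTop 0] with x hx
  rw [hR x hx, Complex.ofReal_exp, mul_assoc, ← Complex.exp_add]
  congr 2
  push_cast
  ring

/-- identity (20) of the paper with `f = v`. Let `s ≥ 1` and `λ > 0`.
If `v : ℝ → ℂ` is smooth, bounded on `[0, ∞)`, satisfies `L_λ^s v = 0` on `[0, ∞)` and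
the boundary conditions `B_{s,ℓ} v (0) = 0` for `ℓ = 0, …, s-1`, then
`∑_{j=0}^{s} C(s,j) λ^{2(s-j)} ∫_0^∞ |v^{(j)}|² = 0`. -/
theorem sum_choose_mul_integral_eq_zero (s : ℕ) (hs : 1 ≤ s) (lam : ℝ) (hlam : 0 < lam)
    (v : ℝ → ℂ) (hsmooth : ContDiff ℝ (⊤ : ℕ∞) v)
    (hbdd : ∃ M : ℝ, ∀ x : ℝ, 0 ≤ x → ‖v x‖ ≤ M)
    (hode : ∀ x : ℝ, 0 ≤ x → (Llam lam)^[s] v x = 0)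
    (hbc : ∀ ℓ < s, Bop lam s ℓ v 0 = 0) :
    ∑ j ∈ Finset.range (s + 1),
      (s.choose j : ℝ) * lam ^ (2 * (s - j)) *
        ∫ x in Set.Ioi (0 : ℝ), ‖iteratedDeriv j v x‖ ^ 2 = 0 := by
  classical
  obtain ⟨Q, hQ⟩ := EP_bdd lam hlam v (EP_L lam s v hsmooth hode) hbdd
  choose R hR using iter_form lam v hsmooth Q hQ
  have hO := fun j => iter_bigO lam hlam (iteratedDeriv j v) (R j) (hR j)
  have hcont : ∀ j, Continuous (iteratedDeriv j v) := fun j => (sm_iter hsmooth j).continuous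
  have ht : ∀ j, Filter.Tendsto (iteratedDeriv j v) Filter.atTop (nhds 0) := by
    intro j
    refine (poly_decay (R j) lam hlam).congr' ?_
    filter_upwards [Filter.eventually_gt_atTop 0] with x hx using (hR j x hx).symm
  have hint : ∀ j, MeasureTheory.IntegrableOn (fun x => ‖iteratedDeriv j v x‖ ^ 2) (Set.Ioi 0) := by
    intro j
    refine integrable_of_isBigO_exp_neg hlam ((hcont j).norm.pow 2).continuousOn ?_
    have h1 := ((hO j).norm_left).pow 2
    refine h1.congr_right fun x => ?_
    rw [← Real.exp_nat_mul]
    congr 1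
    push_cast
    ring
  have hint2 : ∀ j ∈ Finset.range (s+1), MeasureTheory.IntegrableOn
      (fun x => (s.choose j : ℝ) * lam ^ (2 * (s - j)) * ‖iteratedDeriv j v x‖ ^ 2) (Set.Ioi 0) :=
    fun j _ => (hint j).const_mul _
  have hFt : Filter.Tendsto (FF lam s v) Filter.atTop (nhds 0) := by
    have hG : ∀ m, Filter.Tendsto (GG lam s v m) Filter.atTop (nhds 0) := by
      intro m
      have := tendsto_finsetSum (Finset.range (s + 1 - m)) (fun k _ => (ht (m + 2 * k)).const_mul
        ((-1 : ℂ) ^ k * (s.choose (m + k) : ℂ) * (lam : ℂ) ^ (2 * (s - m - k))))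
      simp only [mul_zero, Finset.sum_const_zero] at this
      exact this
    have := tendsto_finsetSum (Finset.range s) (fun m _ => ((ht m).star).mul (hG (m+1)))
    simp only [mul_zero, Finset.sum_const_zero] at this
    exact this
  have hF0 : FF lam s v 0 = 0 := by
    unfold FF
    refine Finset.sum_eq_zero fun m hm => ?_
    have hm' := Finset.mem_range.1 hm
    rw [GG_B s m hm', hbc m hm', mul_zero]
  have key := MeasureTheory.integral_Ioi_of_hasDerivAt_of_tendsto' (a := 0)
    (fun x hx => FF_deriv s hsmooth x (hode x hx))
    (MeasureTheory.Integrable.ofReal (MeasureTheory.integrable_finsetSum _ hint2)) hFt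
  rw [hF0, sub_zero, integral_complex_ofReal, Complex.ofReal_eq_zero,
    MeasureTheory.integral_finsetSum _ hint2] at key
  refine Eq.trans ?_ key
  refine Finset.sum_congr rfl fun j _ => ?_
  rw [MeasureTheory.integral_const_mul]
end

section
/- Let s be a positive integer and λ > 0. Let v : ℝ → ℂ be a smooth function that is bounded on [0, ∞), satisfies L_λ^s v = 0 on [0, ∞) where L_λ w := λ² w − w'', and satisfies the boundary conditions B_{s,ℓ} v(0) = 0 for all ℓ = 0, 1, …, s−1, where B_{s,ℓ} v := ∑_{k=0}^{s−1−ℓ} (−1)^k binom(s, ℓ+k+1) λ^{2(s−1−ℓ−k)} v^{(ℓ+2k+1)}. Then v(x) = 0 for all x ≥ 0. -/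
open Polynomial Filter Topology
open scoped ContDiff

theorem aux_antideriv (q : ℂ[X]) : ∃ Q : ℂ[X], derivative Q = q := by
  induction q using Polynomial.induction_on' with
  | add p q hp hq =>
    obtain ⟨P, rfl⟩ := hp
    obtain ⟨Q, rfl⟩ := hq
    exact ⟨P + Q, by simp⟩
  | monomial n a =>
    refine ⟨monomial (n+1) (a / (n+1)), ?_⟩
    rw [derivative_monomial]
    have : ((n:ℂ) + 1) ≠ 0 := by exact_mod_cast Nat.succ_ne_zero n
    simp [this]

theorem aux_poly_hasDeriv (p : ℂ[X]) (x : ℝ) :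
    HasDerivAt (fun x : ℝ => p.eval (x:ℂ)) ((derivative p).eval (x:ℂ)) x :=
  (p.hasDerivAt (x:ℂ)).comp_ofReal

theorem aux_exp_hasDeriv (a : ℂ) (x : ℝ) :
    HasDerivAt (fun x : ℝ => Complex.exp (a * x)) (a * Complex.exp (a * x)) x := by
  have h : HasDerivAt (fun z : ℂ => Complex.exp (a * z)) (Complex.exp (a * x) * (a * 1)) (x:ℂ) :=
    ((hasDerivAt_id (x:ℂ)).const_mul a).cexp
  have := h.comp_ofReal
  convert this using 1; ring

/-- smooth functions -/
def SmS : Submodule ℂ (ℝ → ℂ) where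
  carrier := {f | ContDiff ℝ ∞ f}
  add_mem' := by
    intro f g hf hg
    exact ContDiff.add (Set.mem_ofPred_eq ▸ hf) (Set.mem_ofPred_eq ▸ hg)
  zero_mem' := by
    rw [Set.mem_ofPred_eq]
    exact contDiff_const (c := (0:ℂ))
  smul_mem' := by
    intro c f hf
    rw [Set.mem_ofPred_eq] at hf ⊢
    exact contDiff_const.mul hf

theorem SmS_cd (f : SmS) : ContDiff ℝ ∞ f.1 := f.2

theorem SmS_diff (f : SmS) : Differentiable ℝ (f : ℝ → ℂ) :=
  (SmS_cd f).differentiable (by simp)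

noncomputable def DS : SmS →ₗ[ℂ] SmS where
  toFun f := ⟨deriv f.1, (contDiff_infty_iff_deriv.1 (SmS_cd f)).2⟩
  map_add' f g := by
    ext x
    exact deriv_add (SmS_diff f x) (SmS_diff g x)
  map_smul' c f := by
    ext x
    exact deriv_const_smul c (SmS_diff f x)

theorem DS_hasDeriv (f : SmS) (x : ℝ) : HasDerivAt f.1 ((DS f).1 x) x :=
  (SmS_diff f x).hasDerivAt

theorem DS_pow (n : ℕ) (f : SmS) : ((DS ^ n) f).1 = iteratedDeriv n f.1 := by
  induction n with
  | zero => simp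
  | succ n ih => rw [pow_succ', iteratedDeriv_succ, ← ih]; rfl

theorem Llam_iter (lam : ℝ) (s : ℕ) (f : SmS) :
    (aeval DS ((C ((lam:ℂ)^2) - X^2)^s) f).1 = (Llam lam)^[s] f.1 := by
  induction s with
  | zero => simp
  | succ s ih =>
    rw [Function.iterate_succ_apply', ← ih, pow_succ', map_mul]
    set g := aeval DS ((C ((lam:ℂ)^2) - X^2)^s) f
    change (aeval DS (C ((lam:ℂ)^2) - X^2) g).1 = _
    ext x
    simp [Llam, ← DS_pow, -map_pow, Module.algebraMap_end_apply]
    rw [map_pow, aeval_X]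

/-- functions vanishing on the closed half line -/
def vanS : Submodule ℂ SmS where
  carrier := {f | ∀ x, 0 ≤ x → f.1 x = 0}
  add_mem' := fun {f g} hf hg x hx => by simp [hf x hx, hg x hx]
  zero_mem' := fun x hx => rfl
  smul_mem' := fun c f hf x hx => by simp [hf x hx]

theorem vanS_of_pos (f : SmS) (h : ∀ x, 0 < x → f.1 x = 0) : f ∈ vanS := by
  intro x hx
  have hc : IsClosed {x | f.1 x = 0} := isClosed_eq (SmS_diff f).continuous continuous_const
  have : closure (Set.Ioi (0:ℝ)) ⊆ {x | f.1 x = 0} := hc.closure_subset_iff.2 h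
  rw [closure_Ioi] at this
  exact this hx

theorem vanS_DS {f : SmS} (h : f ∈ vanS) : DS f ∈ vanS := by
  apply vanS_of_pos
  intro x hx
  have : f.1 =ᶠ[𝓝 x] fun _ => 0 := by
    filter_upwards [lt_mem_nhds hx] with y hy using h y hy.le
  have h2 := this.deriv_eq
  simpa [DS] using h2

theorem vanS_aeval (p : ℂ[X]) {f : SmS} (h : f ∈ vanS) : aeval DS p f ∈ vanS := by
  induction p using Polynomial.induction_on' generalizing f with
  | add p q hp hq => simpa using vanS.add_mem (hp h) (hq h)
  | monomial n a =>
    rw [aeval_monomial]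
    change algebraMap ℂ (Module.End ℂ SmS) a ((DS^n) f) ∈ _
    rw [Module.algebraMap_end_apply]
    apply vanS.smul_mem
    induction n with
    | zero => simpa
    | succ n ih => rw [pow_succ']; exact vanS_DS ih

theorem aux_poly_exp (a : ℂ) (s : ℕ) (f : SmS) (h : aeval DS ((X - C a)^s) f ∈ vanS) :
    ∃ p : ℂ[X], ∀ x : ℝ, 0 ≤ x → f.1 x = p.eval (x:ℂ) * Complex.exp (a * x) := by
  induction s generalizing f with
  | zero => exact ⟨0, fun x hx => by simpa using h x hx⟩
  | succ s ih =>
    rw [pow_succ, map_mul] at h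
    obtain ⟨q, hq⟩ := ih _ h
    obtain ⟨Q, rfl⟩ := aux_antideriv q
    have key : ∀ x : ℝ, HasDerivAt (fun x : ℝ => f.1 x * Complex.exp (-a * x) - Q.eval (x:ℂ))
        ((DS f).1 x * Complex.exp (-a*x) + f.1 x * (-a * Complex.exp (-a*x))
          - (derivative Q).eval (x:ℂ)) x := fun x =>
      ((DS_hasDeriv f x).mul (aux_exp_hasDeriv (-a) x)).sub (aux_poly_hasDeriv Q x)
    have key2 : ∀ x : ℝ, 0 ≤ x → (DS f).1 x * Complex.exp (-a*x) + f.1 x * (-a * Complex.exp (-a*x))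
          - (derivative Q).eval (x:ℂ) = 0 := by
      intro x hx
      have h1 := hq x hx
      have h2 : (DS f).1 x - a * f.1 x = (derivative Q).eval (x:ℂ) * Complex.exp (a * x) := by
        rw [← h1]; simp [Module.algebraMap_end_apply]
      have h3 : Complex.exp (a*x) * Complex.exp (-a*x) = 1 := by
        rw [← Complex.exp_add]; simp
      linear_combination Complex.exp (-a*x) * h2 + (derivative Q).eval (x:ℂ) * h3
    refine ⟨Q + C (f.1 0 - Q.eval 0), fun x hx => ?_⟩
    have := constant_of_has_deriv_right_zero (a := 0) (b := x)
      (f := (fun x : ℝ => f.1 x * Complex.exp (-a * x) - Q.eval (x:ℂ)))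
      (fun y hy => (key y).continuousAt.continuousWithinAt)
      (fun y hy => by
        have := (key y).hasDerivWithinAt (s := Set.Ici y)
        rwa [key2 y hy.1] at this) x ⟨hx, le_rfl⟩
    have h3 : Complex.exp (a*x) * Complex.exp (-a*x) = 1 := by
      rw [← Complex.exp_add]; simp
    simp at this
    simp
    simp at h3
    linear_combination Complex.exp (a*x) * this - f.1 x * h3

theorem aux_decay (lam : ℝ) (hlam : 0 < lam) (p : ℂ[X]) :
    Tendsto (fun x : ℝ => p.eval (x:ℂ) * Complex.exp (-(lam:ℂ) * x)) atTop (𝓝 0) := by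
  induction p using Polynomial.induction_on' with
  | add p q hp hq => simpa [add_mul] using hp.add hq
  | monomial n a =>
    have h := (tendsto_rpow_mul_exp_neg_mul_atTop_nhds_zero n lam hlam)
    simp only [Real.rpow_natCast] at h
    have h2 := ((Complex.continuous_ofReal.tendsto 0).comp h).const_mul a
    simpa [Function.comp_def, mul_assoc] using h2

theorem aux_poly_zero (q : ℂ[X]) (h : Tendsto (fun x : ℝ => q.eval (x:ℂ)) atTop (𝓝 0)) : q = 0 := by
  by_cases hd : 0 < degree q
  · have h1 := q.tendsto_norm_atTop hd (l := atTop) (z := fun x : ℝ => (x:ℂ))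
      (by simpa using tendsto_abs_atTop_atTop)
    exact absurd h.norm (not_tendsto_nhds_of_tendsto_atTop h1 _)
  · rw [eq_C_of_degree_le_zero (le_of_not_gt hd)] at h ⊢
    simp only [eval_C] at h
    rw [tendsto_nhds_unique h tendsto_const_nhds |>.symm] 
    simp

theorem aux_energy (w : ℕ → ℝ → ℂ) (hw : ∀ n x, HasDerivAt (w n) (w (n+1) x) x) (j : ℕ) (x : ℝ) :
    HasDerivAt (fun x => ∑ l ∈ Finset.range j, (-1:ℂ)^(j-1-l) * w (2*j-1-l) x * star (w l x))
      (w j x * star (w j x) - (-1)^j * w (2*j) x * star (w 0 x)) x := by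
  have h : ∀ l ∈ Finset.range j, HasDerivAt
      (fun x => (-1:ℂ)^(j-1-l) * w (2*j-1-l) x * star (w l x))
      ((-1:ℂ)^(j-(l+1)) * w (2*j-(l+1)) x * star (w (l+1) x)
        - (-1:ℂ)^(j-l) * w (2*j-l) x * star (w l x)) x := by
    intro l hl
    rw [Finset.mem_range] at hl
    obtain ⟨m, rfl⟩ := Nat.exists_eq_add_of_lt hl
    have := ((hw (2*(l+m+1)-1-l) x).const_mul ((-1:ℂ)^(l+m+1-1-l))).fun_mul ((hw l x).star)
    refine this.congr_deriv ?_
    rw [show l+m+1-(l+1) = m by omega, show l+m+1-l = m+1 by omega, show l+m+1-1-l = m by omega,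
      show 2*(l+m+1)-1-l+1 = 2*(l+m+1)-l by omega, show 2*(l+m+1)-1-l = 2*(l+m+1)-(l+1) by omega]
    ring
  have := HasDerivAt.fun_sum h
  rw [Finset.sum_range_sub (fun l => (-1:ℂ)^(j-l) * w (2*j-l) x * star (w l x))] at this
  simpa [two_mul] using this

theorem aux_sol (lam : ℝ) (hlam : 0 < lam) (s : ℕ) (f : SmS)
    (hbdd : ∃ M : ℝ, ∀ x : ℝ, 0 ≤ x → ‖f.1 x‖ ≤ M)
    (h : aeval DS ((C ((lam:ℂ)^2) - X^2)^s) f ∈ vanS) :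
    ∃ p : ℂ[X], ∀ x : ℝ, 0 ≤ x → f.1 x = p.eval (x:ℂ) * Complex.exp (-(lam:ℂ) * x) := by
  have hl : (lam:ℂ) ≠ 0 := by exact_mod_cast hlam.ne'
  have hcop : IsCoprime ((X - C (lam:ℂ))^s) ((X - C (-(lam:ℂ)))^s) := by
    apply IsCoprime.pow
    apply isCoprime_X_sub_C_of_isUnit_sub
    rw [isUnit_iff_ne_zero]
    intro h0
    apply hl
    linear_combination h0 / 2
  obtain ⟨a, b, hab⟩ := hcop
  have hP : (C ((lam:ℂ)^2) - X^2 : ℂ[X])^s =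
      (-1)^s * ((X - C (lam:ℂ))^s * (X - C (-(lam:ℂ)))^s) := by
    rw [← mul_pow, ← mul_pow]; congr 1; simp; ring
  have hP2 : (X - C (lam:ℂ))^s * (X - C (-(lam:ℂ)))^s = (-1)^s * (C ((lam:ℂ)^2) - X^2 : ℂ[X])^s := by
    rw [hP, ← mul_assoc, ← mul_pow (-1 : ℂ[X])]; simp
  obtain ⟨p, hp⟩ := aux_poly_exp (-(lam:ℂ)) s (aeval DS (a * (X - C (lam:ℂ))^s) f) (by
    rw [← Module.End.mul_apply, ← map_mul,
      show (X - C (-(lam:ℂ)))^s * (a * (X - C (lam:ℂ))^s) =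
        (a * (-1)^s) * (C ((lam:ℂ)^2) - X^2 : ℂ[X])^s by linear_combination a * hP2, map_mul]
    exact vanS_aeval _ h)
  obtain ⟨q, hq⟩ := aux_poly_exp (lam:ℂ) s (aeval DS (b * (X - C (-(lam:ℂ)))^s) f) (by
    rw [← Module.End.mul_apply, ← map_mul,
      show (X - C (lam:ℂ))^s * (b * (X - C (-(lam:ℂ)))^s) =
        (b * (-1)^s) * (C ((lam:ℂ)^2) - X^2 : ℂ[X])^s by linear_combination b * hP2, map_mul]
    exact vanS_aeval _ h)
  have hsum : ∀ x : ℝ, 0 ≤ x → f.1 x = p.eval (x:ℂ) * Complex.exp (-(lam:ℂ) * x) +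
      q.eval (x:ℂ) * Complex.exp ((lam:ℂ) * x) := by
    intro x hx
    rw [← hp x hx, ← hq x hx]
    have : f = aeval DS (a * (X - C (lam:ℂ))^s) f + aeval DS (b * (X - C (-(lam:ℂ)))^s) f := by
      rw [← LinearMap.add_apply, ← map_add, hab]; simp
    exact congrArg (fun g : SmS => g.1 x) this
  obtain ⟨M, hM⟩ := hbdd
  have hE : Tendsto (fun x : ℝ => Complex.exp (-(lam:ℂ) * x)) atTop (𝓝 0) := by
    simpa using aux_decay lam hlam 1
  have hq0 : q = 0 := by
    apply aux_poly_zero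
    have h1 : Tendsto (fun x : ℝ => f.1 x * Complex.exp (-(lam:ℂ) * x)) atTop (𝓝 0) := by
      have h2 : Tendsto (fun x : ℝ => M * ‖Complex.exp (-(lam:ℂ) * x)‖) atTop (𝓝 0) := by
        simpa using hE.norm.const_mul M
      refine squeeze_zero_norm' ?_ h2
      filter_upwards [eventually_ge_atTop 0] with x hx
      rw [norm_mul]
      exact mul_le_mul_of_nonneg_right (hM x hx) (norm_nonneg _)
    have h3 := h1.sub ((aux_decay lam hlam p).mul hE)
    simp only [mul_zero, sub_zero] at h3
    refine h3.congr' ?_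
    filter_upwards [eventually_ge_atTop 0] with x hx
    have h4 : Complex.exp (lam*x) * Complex.exp (-(lam:ℂ)*x) = 1 := by
      rw [← Complex.exp_add]; simp
    rw [hsum x hx]
    linear_combination q.eval (x:ℂ) * h4
  refine ⟨p, fun x hx => ?_⟩
  rw [hsum x hx, hq0]; simp

theorem aux_derivs (c : ℂ) (n : ℕ) (f : SmS) (p : ℂ[X])
    (hp : ∀ x : ℝ, 0 ≤ x → f.1 x = p.eval (x:ℂ) * Complex.exp (c * x)) :
    ∃ p : ℂ[X], ∀ x : ℝ, 0 < x → ((DS^n) f).1 x = p.eval (x:ℂ) * Complex.exp (c * x) := by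
  induction n with
  | zero => exact ⟨p, fun x hx => hp x hx.le⟩
  | succ n ih =>
    obtain ⟨r, hr⟩ := ih
    refine ⟨derivative r + C c * r, fun x hx => ?_⟩
    have h1 := DS_hasDeriv ((DS^n) f) x
    have h2 := (aux_poly_hasDeriv r x).fun_mul (aux_exp_hasDeriv c x)
    have h3 : ((DS^n) f).1 =ᶠ[𝓝 x] fun x : ℝ => r.eval (x:ℂ) * Complex.exp (c * x) := by
      filter_upwards [lt_mem_nhds hx] with y hy using hr y hy
    have h4 := (h2.congr_of_eventuallyEq h3).unique h1
    rw [pow_succ']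
    change (DS ((DS^n) f)).1 x = _
    rw [← h4]; simp; ring

theorem aux_swap (s : ℕ) (F : ℕ → ℕ → ℂ) :
    ∑ j ∈ Finset.range (s+1), ∑ l ∈ Finset.range j, F j l =
      ∑ l ∈ Finset.range s, ∑ k ∈ Finset.range (s - 1 - l + 1), F (l+k+1) l := by
  rw [Finset.sum_sigma', Finset.sum_sigma']
  refine Finset.sum_nbij' (fun z => ⟨z.2, z.1 - 1 - z.2⟩) (fun z => ⟨z.1 + z.2 + 1, z.1⟩) ?_ ?_ ?_ ?_ ?_
  · rintro ⟨j, l⟩ h; simp at h ⊢; omega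
  · rintro ⟨j, l⟩ h; simp at h ⊢; omega
  · rintro ⟨j, l⟩ h; simp at h ⊢; omega
  · rintro ⟨j, l⟩ h; simp at h ⊢; try omega
  · rintro ⟨j, l⟩ h; simp at h ⊢; congr; omega

theorem Llam_expand (lam : ℝ) (s : ℕ) (f : SmS) (x : ℝ) :
    (aeval DS ((C ((lam:ℂ)^2) - X^2)^s) f).1 x =
      ∑ j ∈ Finset.range (s+1), (s.choose j : ℂ) * (lam:ℂ)^(2*(s-j)) *
        ((-1)^j * ((DS^(2*j)) f).1 x) := by
  have : (C ((lam:ℂ)^2) - X^2 : ℂ[X])^s = ∑ j ∈ Finset.range (s+1),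
      C ((s.choose j : ℂ) * (lam:ℂ)^(2*(s-j)) * (-1)^j) * X^(2*j) := by
    rw [show (C ((lam:ℂ)^2) - X^2 : ℂ[X]) = -X^2 + C ((lam:ℂ)^2) by ring, add_pow]
    refine Finset.sum_congr rfl fun j hj => ?_
    rw [neg_pow, pow_mul X 2 j]
    simp [pow_mul]; ring
  rw [this, map_sum, LinearMap.sum_apply, Submodule.coe_sum, Finset.sum_apply]
  refine Finset.sum_congr rfl fun j hj => ?_
  rw [map_mul, aeval_C, map_pow, aeval_X, Module.End.mul_apply, Module.algebraMap_end_apply]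
  change _ * _ = _
  ring

theorem bounded_solution_with_boundary_conditions_eq_zero (s : ℕ) (hs : 1 ≤ s)
    (lam : ℝ) (hlam : 0 < lam)
    (v : ℝ → ℂ) (hsmooth : ContDiff ℝ (⊤ : ℕ∞) v)
    (hbdd : ∃ M : ℝ, ∀ x : ℝ, 0 ≤ x → ‖v x‖ ≤ M)
    (hode : ∀ x : ℝ, 0 ≤ x → (Llam lam)^[s] v x = 0)
    (hbc : ∀ ℓ < s, Bop lam s ℓ v 0 = 0) :
    ∀ x : ℝ, 0 ≤ x → v x = 0 := by
  obtain ⟨f, rfl⟩ : ∃ f : SmS, f.1 = v := ⟨⟨v, hsmooth⟩, rfl⟩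
  have hvan : aeval DS ((C ((lam:ℂ)^2) - X^2)^s) f ∈ vanS := by
    intro x hx
    rw [Llam_iter]; exact hode x hx
  obtain ⟨p, hp⟩ := aux_sol lam hlam s f hbdd hvan
  set w : ℕ → ℝ → ℂ := fun n => ((DS^n) f).1 with hwdef
  have hw : ∀ n x, HasDerivAt (w n) (w (n+1) x) x := by
    intro n x
    have := DS_hasDeriv ((DS^n) f) x
    simp only [hwdef, pow_succ']
    exact this
  have hw0 : ∀ n, Tendsto (w n) atTop (𝓝 0) := by
    intro n
    obtain ⟨r, hr⟩ := aux_derivs _ n f p hp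
    refine (aux_decay lam hlam r).congr' ?_
    filter_upwards [eventually_gt_atTop 0] with x hx using (hr x hx).symm
  set c : ℕ → ℝ := fun j => (s.choose j : ℝ) * lam^(2*(s-j)) with hc
  have hc0 : ∀ j, 0 ≤ c j := fun j => by positivity
  set Φ : ℝ → ℂ := fun x => ∑ j ∈ Finset.range (s+1), (c j : ℂ) *
    ∑ l ∈ Finset.range j, (-1:ℂ)^(j-1-l) * w (2*j-1-l) x * star (w l x) with hΦ
  have hΦd : ∀ x, 0 ≤ x → HasDerivAt Φ (((∑ j ∈ Finset.range (s+1), c j * ‖w j x‖^2 : ℝ)) : ℂ) x := by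
    intro x hx
    have h1 := HasDerivAt.fun_sum (u := Finset.range (s+1))
      (fun j _ => (aux_energy w hw j x).const_mul (c j : ℂ))
    refine h1.congr_deriv ?_
    have h2 := hvan x hx
    rw [Llam_expand] at h2
    have h3 : ∑ j ∈ Finset.range (s+1), (c j : ℂ) * ((-1)^j * w (2*j) x) = 0 := by
      rw [← h2]
      refine Finset.sum_congr rfl fun j hj => ?_
      simp [hc, hwdef]
    have h4 : ∑ j ∈ Finset.range (s+1), (c j : ℂ) * (w j x * star (w j x) -
        (-1)^j * w (2*j) x * star (w 0 x)) = ∑ j ∈ Finset.range (s+1), (c j : ℂ) *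
        (w j x * star (w j x)) - (∑ j ∈ Finset.range (s+1), (c j : ℂ) * ((-1)^j * w (2*j) x)) * star (w 0 x) := by
      rw [Finset.sum_mul, ← Finset.sum_sub_distrib]
      refine Finset.sum_congr rfl fun j hj => ?_
      ring
    rw [h4, h3, zero_mul, sub_zero]
    push_cast
    refine Finset.sum_congr rfl fun j hj => ?_
    congr 1
    exact Complex.mul_conj' _
  have hΦ0 : Φ 0 = 0 := by
    simp only [hΦ, Finset.mul_sum]
    rw [aux_swap]
    refine Finset.sum_eq_zero fun l hl => ?_
    have h1 := hbc l (Finset.mem_range.1 hl)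
    have h2 : Bop lam s l f.1 0 * star (w l 0) = 0 := by rw [h1, zero_mul]
    rw [← h2, Bop, Finset.sum_mul]
    refine Finset.sum_congr rfl fun k hk => ?_
    rw [show l+k+1-1-l = k by omega, show 2*(l+k+1)-1-l = l+2*k+1 by omega, ← DS_pow]
    simp only [hc, hwdef, show s - (l+k+1) = s - 1 - l - k by omega]
    push_cast
    ring
  have hΦlim : Tendsto Φ atTop (𝓝 0) := by
    have : (0:ℂ) = ∑ j ∈ Finset.range (s+1), (c j : ℂ) *
        ∑ l ∈ Finset.range j, (-1:ℂ)^(j-1-l) * 0 * star 0 := by simp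
    rw [this]
    exact tendsto_finsetSum _ fun j _ => (tendsto_finsetSum _ fun l _ =>
      ((hw0 _).const_mul _).mul ((continuous_star.tendsto 0).comp (hw0 l))).const_mul _
  set E : ℝ → ℝ := fun x => (Φ x).re with hE
  have hEd : ∀ x, 0 ≤ x → HasDerivAt E (∑ j ∈ Finset.range (s+1), c j * ‖w j x‖^2) x := by
    intro x hx
    have := Complex.reCLM.hasFDerivAt.comp_hasDerivAt x (hΦd x hx)
    exact this
  have hmono : MonotoneOn E (Set.Ici 0) := by
    apply monotoneOn_of_deriv_nonneg (convex_Ici 0)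
    · exact fun x hx => (hEd x hx).continuousAt.continuousWithinAt
    · intro x hx
      rw [interior_Ici] at hx
      exact (hEd x (le_of_lt hx)).differentiableAt.differentiableWithinAt
    · intro x hx
      rw [interior_Ici] at hx
      rw [(hEd x (le_of_lt hx)).deriv]
      exact Finset.sum_nonneg fun j _ => mul_nonneg (hc0 j) (sq_nonneg _)
  have hElim : Tendsto E atTop (𝓝 0) := by
    exact (Complex.continuous_re.tendsto 0).comp hΦlim
  have hEz : ∀ x, 0 ≤ x → E x = 0 := by
    intro x hx
    apply le_antisymm
    · refine ge_of_tendsto hElim ?_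
      filter_upwards [eventually_ge_atTop x] with y hy
      exact hmono hx (hx.trans hy) hy
    · have := hmono (Set.mem_Ici.2 le_rfl) hx hx
      simpa [hE, hΦ0] using this
  refine vanS_of_pos f ?_
  intro x hx
  have h1 : E =ᶠ[𝓝 x] fun _ => 0 := by
    filter_upwards [lt_mem_nhds hx] with y hy using hEz y (le_of_lt hy)
  have h2 := (hEd x hx.le).unique ((hasDerivAt_const x (0:ℝ)).congr_of_eventuallyEq h1)
  rw [Finset.sum_eq_zero_iff_of_nonneg (fun j _ => mul_nonneg (hc0 j) (sq_nonneg _))] at h2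
  have h3 := h2 0 (by simp)
  have h4 : c 0 ≠ 0 := by simp [hc, hlam.ne']
  simpa [h4, hwdef] using h3
end

section
/- Let Ω ⊆ ℝ^N be a bounded open set, let s be a positive integer, and let f, g be smooth complex-valued functions on an open neighborhood of the closure of Ω. Then ∑_{|α| ≤ s} γ_α ∫_Ω D^α f · conj(D^α g) = ∫_Ω f · conj(g) + ∑_{j=1}^{N} ∑_{|β| ≤ s−1} γ_β ∫_Ω D^β(∂f/∂x_j) · conj(D^β(∂g/∂x_j)), where γ_α := |α|!/α!. -/
open MeasureTheory

/-- The partial derivative `∂f/∂x_j` of a function `f : ℝ^N → ℂ`. -/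
noncomputable def pderivCoord {N : ℕ} (j : Fin N) (f : (Fin N → ℝ) → ℂ) :
    (Fin N → ℝ) → ℂ :=
  fun x => fderiv ℝ f x (Pi.single j 1)

/-- The multi-index derivative `D^α f = ∂^{α 0}_{x_0} ⋯ ∂^{α (N-1)}_{x_{N-1}} f`. -/
noncomputable def Dpow {N : ℕ} (α : Fin N → ℕ) (f : (Fin N → ℝ) → ℂ) :
    (Fin N → ℝ) → ℂ :=
  (List.finRange N).foldr (fun i g => (pderivCoord i)^[α i] g) f

/-- The finset of multi-indices `α ∈ ℕ^N` with `|α| = ∑ i, α i ≤ s`. -/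
def multiIdx (N s : ℕ) : Finset (Fin N → ℕ) :=
  (Fintype.piFinset fun _ : Fin N => Finset.range (s + 1)).filter fun α => ∑ i, α i ≤ s

lemma pd_congr {N : ℕ} {U : Set (Fin N → ℝ)} (hU : IsOpen U) (j : Fin N)
    {f g : (Fin N → ℝ) → ℂ} (h : Set.EqOn f g U) :
    Set.EqOn (pderivCoord j f) (pderivCoord j g) U := by
  intro x hx
  have : f =ᶠ[nhds x] g := h.eventuallyEq_of_mem (hU.mem_nhds hx)
  simp only [pderivCoord, this.fderiv_eq]

lemma pd_smooth {N : ℕ} {U : Set (Fin N → ℝ)} (hU : IsOpen U) (j : Fin N)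
    {f : (Fin N → ℝ) → ℂ} (h : ContDiffOn ℝ (⊤ : ℕ∞) f U) :
    ContDiffOn ℝ (⊤ : ℕ∞) (pderivCoord j f) U := by
  have h1 : ContDiffOn ℝ (⊤ : ℕ∞) (fderiv ℝ f) U :=
    h.fderiv_of_isOpen hU (by simp)
  exact h1.clm_apply contDiffOn_const

lemma pd_comm {N : ℕ} {U : Set (Fin N → ℝ)} (hU : IsOpen U) (i j : Fin N)
    {f : (Fin N → ℝ) → ℂ} (h : ContDiffOn ℝ (⊤ : ℕ∞) f U) :
    Set.EqOn (pderivCoord i (pderivCoord j f)) (pderivCoord j (pderivCoord i f)) U := by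
  intro x hx
  have h1 : ContDiffOn ℝ (⊤ : ℕ∞) (fderiv ℝ f) U :=
    h.fderiv_of_isOpen hU (by simp)
  have hd : DifferentiableAt ℝ (fderiv ℝ f) x :=
    (h1.contDiffAt (hU.mem_nhds hx)).differentiableAt (by simp)
  have hs : IsSymmSndFDerivAt ℝ f x :=
    (h.contDiffAt (hU.mem_nhds hx)).isSymmSndFDerivAt (by
      simp only [minSmoothness_of_isRCLikeNormedField]
      exact WithTop.coe_le_coe.2 (le_top : (2 : ℕ∞) ≤ ⊤))
  have key : ∀ a b : Fin N, pderivCoord a (pderivCoord b f) x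
      = fderiv ℝ (fderiv ℝ f) x (Pi.single a 1) (Pi.single b 1) := by
    intro a b
    unfold pderivCoord
    rw [fderiv_clm_apply hd (differentiableAt_const _)]
    simp
  rw [key, key]
  exact hs _ _

lemma it_congr {N : ℕ} {U : Set (Fin N → ℝ)} (hU : IsOpen U) (j : Fin N) (n : ℕ)
    {f g : (Fin N → ℝ) → ℂ} (h : Set.EqOn f g U) :
    Set.EqOn ((pderivCoord j)^[n] f) ((pderivCoord j)^[n] g) U := by
  induction n with
  | zero => exact h
  | succ n ih => rw [Function.iterate_succ_apply', Function.iterate_succ_apply']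
                 exact pd_congr hU j ih

lemma it_smooth {N : ℕ} {U : Set (Fin N → ℝ)} (hU : IsOpen U) (j : Fin N) (n : ℕ)
    {f : (Fin N → ℝ) → ℂ} (h : ContDiffOn ℝ (⊤ : ℕ∞) f U) :
    ContDiffOn ℝ (⊤ : ℕ∞) ((pderivCoord j)^[n] f) U := by
  induction n with
  | zero => exact h
  | succ n ih => rw [Function.iterate_succ_apply']
                 exact pd_smooth hU j ih

lemma it_comm {N : ℕ} {U : Set (Fin N → ℝ)} (hU : IsOpen U) (i j : Fin N) (n : ℕ)
    {f : (Fin N → ℝ) → ℂ} (h : ContDiffOn ℝ (⊤ : ℕ∞) f U) :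
    Set.EqOn ((pderivCoord i)^[n] (pderivCoord j f)) (pderivCoord j ((pderivCoord i)^[n] f)) U := by
  induction n with
  | zero => exact fun _ _ => rfl
  | succ n ih =>
    rw [Function.iterate_succ_apply', Function.iterate_succ_apply']
    exact (pd_congr hU i ih).trans (pd_comm hU i j (it_smooth hU i n h))

noncomputable def Dl {N : ℕ} (l : List (Fin N)) (α : Fin N → ℕ) (f : (Fin N → ℝ) → ℂ) :
    (Fin N → ℝ) → ℂ :=
  l.foldr (fun i g => (pderivCoord i)^[α i] g) f

lemma Dl_cons {N : ℕ} (i : Fin N) (l : List (Fin N)) (α : Fin N → ℕ) (f : (Fin N → ℝ) → ℂ) :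
    Dl (i :: l) α f = (pderivCoord i)^[α i] (Dl l α f) := rfl

lemma Dl_smooth {N : ℕ} {U : Set (Fin N → ℝ)} (hU : IsOpen U) (l : List (Fin N))
    (α : Fin N → ℕ) {f : (Fin N → ℝ) → ℂ} (h : ContDiffOn ℝ (⊤ : ℕ∞) f U) :
    ContDiffOn ℝ (⊤ : ℕ∞) (Dl l α f) U := by
  induction l with
  | nil => exact h
  | cons i l ih => exact it_smooth hU i _ ih

lemma Dl_comm {N : ℕ} {U : Set (Fin N → ℝ)} (hU : IsOpen U) (l : List (Fin N))
    (α : Fin N → ℕ) (j : Fin N) {f : (Fin N → ℝ) → ℂ} (h : ContDiffOn ℝ (⊤ : ℕ∞) f U) :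
    Set.EqOn (Dl l α (pderivCoord j f)) (pderivCoord j (Dl l α f)) U := by
  induction l with
  | nil => exact fun _ _ => rfl
  | cons i l ih =>
    rw [Dl_cons, Dl_cons]
    exact (it_congr hU i _ ih).trans (it_comm hU i j _ (Dl_smooth hU l α h))

lemma Dl_notMem {N : ℕ} (l : List (Fin N)) (α : Fin N → ℕ) (j : Fin N) (hj : j ∉ l)
    (f : (Fin N → ℝ) → ℂ) : Dl l (α + Pi.single j 1) f = Dl l α f := by
  induction l with
  | nil => rfl
  | cons i l ih =>
    simp only [List.mem_cons, not_or] at hj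
    rw [Dl_cons, Dl_cons, ih hj.2]
    simp [Pi.single_eq_of_ne (Ne.symm hj.1)]

lemma Dl_mem {N : ℕ} {U : Set (Fin N → ℝ)} (hU : IsOpen U) (l : List (Fin N)) (hl : l.Nodup)
    (α : Fin N → ℕ) (j : Fin N) (hj : j ∈ l)
    {f : (Fin N → ℝ) → ℂ} (h : ContDiffOn ℝ (⊤ : ℕ∞) f U) :
    Set.EqOn (Dl l (α + Pi.single j 1) f) (Dl l α (pderivCoord j f)) U := by
  induction l with
  | nil => simp at hj
  | cons i l ih =>
    rw [List.nodup_cons] at hl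
    rw [Dl_cons, Dl_cons]
    by_cases hij : j = i
    · subst hij
      rw [Dl_notMem l α j hl.1]
      simp only [Pi.add_apply, Pi.single_eq_same, Function.iterate_succ_apply]
      exact it_congr hU j _ (Dl_comm hU l α j h).symm
    · have : (α + Pi.single j 1 : Fin N → ℕ) i = α i := by
        simp [Pi.single_eq_of_ne (Ne.symm hij)]
      rw [this]
      exact it_congr hU i _ (ih hl.2 ((List.mem_cons.1 hj).resolve_left hij))

lemma Dpow_add {N : ℕ} {U : Set (Fin N → ℝ)} (hU : IsOpen U)
    (α : Fin N → ℕ) (j : Fin N) {f : (Fin N → ℝ) → ℂ} (h : ContDiffOn ℝ (⊤ : ℕ∞) f U) :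
    Set.EqOn (Dpow (α + Pi.single j 1) f) (Dpow α (pderivCoord j f)) U :=
  Dl_mem hU _ (List.nodup_finRange N) α j (List.mem_finRange j) h

lemma Dpow_zero {N : ℕ} (f : (Fin N → ℝ) → ℂ) : Dpow 0 f = f := by
  unfold Dpow
  induction List.finRange N with
  | nil => rfl
  | cons i l ih => simp [ih]

lemma mem_multiIdx {N s : ℕ} (α : Fin N → ℕ) : α ∈ multiIdx N s ↔ ∑ i, α i ≤ s := by
  simp only [multiIdx, Finset.mem_filter, Fintype.mem_piFinset, Finset.mem_range,
    and_iff_right_iff_imp]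
  intro h i
  have := Finset.single_le_sum (f := α) (fun _ _ => Nat.zero_le _) (Finset.mem_univ i)
  omega

lemma sum_add_single {N : ℕ} (β : Fin N → ℕ) (j : Fin N) :
    ∑ i, (β + Pi.single j 1 : Fin N → ℕ) i = ∑ i, β i + 1 := by
  simp [Finset.sum_add_distrib]

lemma prod_add_single {N : ℕ} (β : Fin N → ℕ) (j : Fin N) :
    ∏ i, ((β + Pi.single j 1 : Fin N → ℕ) i).factorial
      = (β j + 1) * ∏ i, (β i).factorial := by
  rw [← Finset.mul_prod_erase _ _ (Finset.mem_univ j),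
    ← Finset.mul_prod_erase Finset.univ (fun i => (β i).factorial) (Finset.mem_univ j)]
  have : ∏ x ∈ Finset.univ.erase j, ((β + Pi.single j 1 : Fin N → ℕ) x).factorial
      = ∏ x ∈ Finset.univ.erase j, (β x).factorial := by
    refine Finset.prod_congr rfl fun x hx => ?_
    simp [Pi.single_eq_of_ne (Finset.ne_of_mem_erase hx)]
  rw [this]
  simp [Nat.factorial_succ, mul_assoc]

lemma sub_add_single {N : ℕ} (α : Fin N → ℕ) (j : Fin N) (h : α j ≠ 0) :
    α - Pi.single j 1 + Pi.single j 1 = α := by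
  ext i
  by_cases hi : i = j
  · subst hi; simp; omega
  · simp [Pi.single_eq_of_ne hi]

lemma multinomial_rec {N : ℕ} (α : Fin N → ℕ) (h : α ≠ 0) :
    Nat.multinomial Finset.univ α
      = ∑ j, if α j ≠ 0 then Nat.multinomial Finset.univ (α - Pi.single j 1) else 0 := by
  have hp : 0 < ∏ i, (α i).factorial := Finset.prod_pos fun i _ => Nat.factorial_pos _
  apply Nat.eq_of_mul_eq_mul_left hp
  rw [Nat.multinomial_spec, Finset.mul_sum]
  have hterm : ∀ j, (∏ i, (α i).factorial) *
      (if α j ≠ 0 then Nat.multinomial Finset.univ (α - Pi.single j 1) else 0)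
      = α j * (∑ i, α i - 1).factorial := by
    intro j
    by_cases hj : α j ≠ 0
    · rw [if_pos hj]
      obtain ⟨β, rfl⟩ : ∃ β : Fin N → ℕ, α = β + Pi.single j 1 := ⟨_, (sub_add_single α j hj).symm⟩
      rw [prod_add_single, sum_add_single, add_tsub_cancel_right, mul_assoc,
        Nat.multinomial_spec]
      simp
    · push Not at hj
      simp [hj]
  rw [Finset.sum_congr rfl fun j _ => hterm j, ← Finset.sum_mul]
  have : ∑ i, α i ≠ 0 := by
    intro h0
    apply h
    ext i
    exact (Finset.sum_eq_zero_iff.1 h0) i (Finset.mem_univ i)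
  exact (Nat.mul_factorial_pred this).symm

lemma comb {N : ℕ} (s : ℕ) (hs : 1 ≤ s) (I : (Fin N → ℕ) → ℂ) :
    ∑ α ∈ multiIdx N s, (Nat.multinomial Finset.univ α : ℂ) * I α
      = I 0 + ∑ j : Fin N, ∑ β ∈ multiIdx N (s - 1),
        (Nat.multinomial Finset.univ β : ℂ) * I (β + Pi.single j 1) := by
  have h0 : (0 : Fin N → ℕ) ∈ multiIdx N s := by simp [mem_multiIdx]
  rw [← Finset.add_sum_erase _ _ h0]
  congr 1
  · simp [Nat.multinomial]
  have h1 : ∀ α ∈ (multiIdx N s).erase 0, (Nat.multinomial Finset.univ α : ℂ) * I α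
      = ∑ j, if α j ≠ 0 then
        (Nat.multinomial Finset.univ (α - Pi.single j 1) : ℂ) * I α else 0 := by
    intro α hα
    rw [multinomial_rec α (Finset.ne_of_mem_erase hα)]
    push_cast
    rw [Finset.sum_mul]
    simp only [ite_mul, zero_mul]
  rw [Finset.sum_congr rfl h1, Finset.sum_comm]
  refine Finset.sum_congr rfl fun j _ => ?_
  rw [← Finset.sum_filter]
  refine Finset.sum_nbij' (fun α => α - Pi.single j 1) (fun β => β + Pi.single j 1) ?_ ?_ ?_ ?_ ?_
  · intro α hα
    simp only [Finset.mem_filter, Finset.mem_erase, mem_multiIdx] at hα ⊢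
    have := sum_add_single (α - Pi.single j 1) j
    rw [sub_add_single α j hα.2] at this
    omega
  · intro β hβ
    simp only [Finset.mem_filter, Finset.mem_erase, mem_multiIdx] at hβ ⊢
    have hj : (β + Pi.single j 1 : Fin N → ℕ) j ≠ 0 := by simp
    refine ⟨⟨fun h => hj (by rw [h]; rfl), ?_⟩, hj⟩
    rw [sum_add_single]
    omega
  · intro α hα
    exact sub_add_single α j (Finset.mem_filter.1 hα).2
  · intro β _
    exact add_tsub_cancel_right _ _
  · intro α hα
    simp only [sub_add_single α j (Finset.mem_filter.1 hα).2]

/-- formula (5) of the paper. For `Ω ⊆ ℝ^N` bounded open, `s ≥ 1`,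
and `f, g` smooth on an open neighborhood `U` of the closure of `Ω`,
`⟨f, g⟩_s = ⟨f, g⟩_0 + ∑_j ⟨D_j f, D_j g⟩_{s-1}` with the weights `γ_α = |α|!/α!`. -/
theorem sobolev_inner_product_recursion {N : ℕ} (s : ℕ) (hs : 1 ≤ s)
    (Ω U : Set (Fin N → ℝ)) (hΩopen : IsOpen Ω) (hΩbdd : Bornology.IsBounded Ω)
    (hUopen : IsOpen U) (hΩU : closure Ω ⊆ U)
    (f g : (Fin N → ℝ) → ℂ) (hf : ContDiffOn ℝ (⊤ : ℕ∞) f U) (hg : ContDiffOn ℝ (⊤ : ℕ∞) g U) :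
    ∑ α ∈ multiIdx N s, (Nat.multinomial Finset.univ α : ℂ) *
        ∫ x in Ω, Dpow α f x * (starRingEnd ℂ) (Dpow α g x)
      = (∫ x in Ω, f x * (starRingEnd ℂ) (g x)) +
        ∑ j : Fin N, ∑ β ∈ multiIdx N (s - 1), (Nat.multinomial Finset.univ β : ℂ) *
          ∫ x in Ω, Dpow β (pderivCoord j f) x *
            (starRingEnd ℂ) (Dpow β (pderivCoord j g) x) := by
  have key := comb s hs (fun α => ∫ x in Ω, Dpow α f x * (starRingEnd ℂ) (Dpow α g x))
  simp only [Dpow_zero] at key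
  rw [key]
  congr 1
  refine Finset.sum_congr rfl fun j _ => Finset.sum_congr rfl fun β _ => ?_
  congr 1
  refine setIntegral_congr_fun hΩopen.measurableSet fun x hx => ?_
  have hxU := hΩU (subset_closure hx)
  simp only [Dpow_add hUopen β j hf hxU, Dpow_add hUopen β j hg hxU]
end

section
/- Let s be a positive integer. There exists a constant C > 0 such that for every ε ∈ (0, 1), the function u_ε(x) := x^{s−1}(x+ε)^{3/4} satisfies ∑_{j=0}^{s} ∫_0^1 |u_ε^{(j)}(x)|² dx ≤ C. -/
lemma aux_rpow_bound (a k : ℕ) (h : k ≤ a + 1) (x ε : ℝ) (hx : 0 < x) (hx1 : x ≤ 1)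
    (he : 0 < ε) (he1 : ε < 1) :
    x ^ a * (x + ε) ^ ((3 : ℝ) / 4 - k) ≤ 2 * x ^ (-(1 : ℝ) / 4) := by
  have h1 : (1 : ℝ) ≤ x ^ (-(1 : ℝ) / 4) :=
    Real.one_le_rpow_of_pos_of_le_one_of_nonpos hx hx1 (by norm_num)
  rcases Nat.eq_zero_or_pos k with rfl | hk
  · have h2 : x ^ a ≤ 1 := pow_le_one₀ hx.le hx1
    have h3 : (x + ε) ^ ((3 : ℝ) / 4 - (0 : ℕ)) ≤ 2 := by
      calc (x + ε) ^ ((3 : ℝ) / 4 - (0 : ℕ)) ≤ 2 ^ ((3 : ℝ) / 4 - (0 : ℕ)) :=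
            Real.rpow_le_rpow (by linarith) (by linarith) (by norm_num)
        _ ≤ 2 ^ (1 : ℝ) := Real.rpow_le_rpow_of_exponent_le (by norm_num) (by norm_num)
        _ = 2 := by norm_num
    have h4 : 0 ≤ (x + ε) ^ ((3 : ℝ) / 4 - (0 : ℕ)) := by positivity
    have h5 : 0 ≤ x ^ a := by positivity
    nlinarith
  · have hk' : (1 : ℝ) ≤ k := by exact_mod_cast hk
    have h' : (k : ℝ) ≤ a + 1 := by exact_mod_cast h
    have h2 : (x + ε) ^ ((3 : ℝ) / 4 - k) ≤ x ^ ((3 : ℝ) / 4 - k) :=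
      Real.rpow_le_rpow_of_nonpos hx (by linarith) (by linarith)
    calc x ^ a * (x + ε) ^ ((3 : ℝ) / 4 - k) ≤ x ^ a * x ^ ((3 : ℝ) / 4 - k) := by gcongr
      _ = x ^ ((a : ℝ) + ((3 : ℝ) / 4 - k)) := by
          rw [Real.rpow_add hx, Real.rpow_natCast]
      _ ≤ x ^ (-(1 : ℝ) / 4) := Real.rpow_le_rpow_of_exponent_ge hx hx1 (by linarith)
      _ ≤ 2 * x ^ (-(1 : ℝ) / 4) := by linarith

lemma aux_deriv_bound (s j : ℕ) (hj : j ≤ s) :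
    ∃ K : ℝ, 0 ≤ K ∧ ∀ ε ∈ Set.Ioo (0 : ℝ) 1, ∀ x ∈ Set.Ioc (0 : ℝ) 1,
      |iteratedDeriv j (fun x : ℝ => x ^ (s - 1) * (x + ε) ^ ((3 : ℝ) / 4)) x|
        ≤ K * x ^ (-(1 : ℝ) / 4) := by
  refine ⟨∑ i ∈ Finset.range (j + 1), (j.choose i : ℝ) * ((s - 1).descFactorial i : ℝ) *
    |(descPochhammer ℝ (j - i)).eval (3 / 4 : ℝ)| * 2, by positivity, ?_⟩
  rintro ε ⟨he, he1⟩ x ⟨hx, hx1⟩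
  have hxe : x + ε ≠ 0 := by positivity
  have c1 : ContDiffAt ℝ j (fun x : ℝ => x ^ (s - 1)) x := by fun_prop
  have c2 : ContDiffAt ℝ j (fun x : ℝ => (x + ε) ^ ((3 : ℝ) / 4)) x :=
    ContDiffAt.rpow_const_of_ne (by fun_prop) hxe
  rw [iteratedDeriv_fun_mul c1 c2, Finset.sum_mul]
  refine (Finset.abs_sum_le_sum_abs _ _).trans (Finset.sum_le_sum fun i hi => ?_)
  have e2 : iteratedDeriv (j - i) (fun x : ℝ => (x + ε) ^ ((3 : ℝ) / 4)) x =
      (descPochhammer ℝ (j - i)).eval (3 / 4 : ℝ) * (x + ε) ^ ((3 : ℝ) / 4 - (j - i : ℕ)) := by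
    rw [iteratedDeriv_comp_add_const (j - i) (fun x : ℝ => x ^ ((3 : ℝ) / 4)) ε,
      iteratedDeriv_eq_iterate]
    exact Real.iter_deriv_rpow_const _ _ _
  have e1 : iteratedDeriv i (fun x : ℝ => x ^ (s - 1)) x =
      ((s - 1).descFactorial i : ℝ) * x ^ (s - 1 - i) := by
    simp
  rw [e1, e2]
  have hp : 0 ≤ (x + ε) ^ ((3 : ℝ) / 4 - (j - i : ℕ)) := by positivity
  have hq : 0 ≤ x ^ (s - 1 - i) := by positivity
  rw [abs_mul, abs_mul, abs_mul, abs_mul, abs_of_nonneg hp, abs_of_nonneg hq, Nat.abs_cast,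
    Nat.abs_cast]
  have hb := aux_rpow_bound (s - 1 - i) (j - i) (by omega) x ε hx hx1 he he1
  have hc : 0 ≤ (j.choose i : ℝ) * ((s - 1).descFactorial i : ℝ) *
    |(descPochhammer ℝ (j - i)).eval (3 / 4 : ℝ)| := by positivity
  have := mul_le_mul_of_nonneg_left hb hc
  calc _ = _ := by ring
    _ ≤ _ := this
    _ = _ := by ring

/-- Let `s ≥ 1`. There is a constant `C > 0` such that for every
`ε ∈ (0,1)`, the function `u_ε(x) := x^{s-1} (x+ε)^{3/4}` satisfies
`∑_{j=0}^{s} ∫_0^1 |u_ε^{(j)}(x)|² dx ≤ C`. -/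
theorem sum_integral_sq_iteratedDeriv_le (s : ℕ) (hs : 1 ≤ s) :
    ∃ C > 0, ∀ ε ∈ Set.Ioo (0 : ℝ) 1,
      ∑ j ∈ Finset.range (s + 1),
        (∫ x in (0 : ℝ)..1,
          (iteratedDeriv j (fun x : ℝ => x ^ (s - 1) * (x + ε) ^ ((3 : ℝ) / 4)) x) ^ 2)
        ≤ C := by
  have key : ∀ j : ℕ, ∃ K : ℝ, 0 ≤ K ∧ (j ≤ s → ∀ ε ∈ Set.Ioo (0 : ℝ) 1,
      (∫ x in (0 : ℝ)..1,
          (iteratedDeriv j (fun x : ℝ => x ^ (s - 1) * (x + ε) ^ ((3 : ℝ) / 4)) x) ^ 2) ≤ K) := by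
    intro j
    by_cases hj : j ≤ s
    · obtain ⟨K, hK, h⟩ := aux_deriv_bound s j hj
      have hI : IntervalIntegrable (fun x : ℝ => K ^ 2 * x ^ (-(1 : ℝ) / 2))
          MeasureTheory.volume 0 1 :=
        (intervalIntegral.intervalIntegrable_rpow' (by norm_num)).const_mul _
      refine ⟨|∫ x in (0 : ℝ)..1, K ^ 2 * x ^ (-(1 : ℝ) / 2)|, abs_nonneg _, fun _ ε hε => ?_⟩
      refine (le_abs_self _).trans (le_trans ?_ (le_abs_self _))
      rw [← Real.norm_eq_abs]
      refine intervalIntegral.norm_integral_le_of_norm_le zero_le_one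
        (Filter.Eventually.of_forall fun x hx => ?_) hI
      have hb := h ε hε x hx
      rw [Real.norm_eq_abs, abs_pow]
      calc _ ≤ (K * x ^ (-(1 : ℝ) / 4)) ^ 2 := by gcongr
        _ = K ^ 2 * x ^ (-(1 : ℝ) / 2) := by
          rw [mul_pow, ← Real.rpow_natCast (x ^ _), ← Real.rpow_mul hx.1.le]
          norm_num
    · exact ⟨0, le_rfl, fun h => absurd h hj⟩
  choose K hK h using key
  refine ⟨∑ j ∈ Finset.range (s + 1), K j + 1, ?_, fun ε hε => ?_⟩
  · have := Finset.sum_nonneg fun j (_ : j ∈ Finset.range (s + 1)) => hK j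
    linarith
  · have := Finset.sum_le_sum fun j (hj : j ∈ Finset.range (s + 1)) =>
      h j (by simpa [Nat.lt_succ_iff] using hj) ε hε
    linarith
end
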